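/- Let R be an integral domain, X a set with at least two elements, and L the free Lie algebra over R on X. Then for all x, z ∈ L the following are equivalent: (i) x = r • z for some r ∈ R; (ii) ⁅x, z⁆ = 0 and for every e ∈ L there exists e' ∈ L with ⁅e, e'⁆ = 0 and ⁅x, e⁆ = ⁅z, e'⁆. -/

import Mathlib

/-!
The canonical homomorphism `i` from `L` to the free associative algebra on `X` is injective over
every commutative ring. To see this, fix a generator `a`. Sending the generators `(n, b)`, `b ≠ a`,
of another free Lie algebra `M` to `(ad a) ^ n b` defines a homomorphism `M → L` (Lazard
elimination), and a representation of the free associative algebra on `X` shows that `i` vanishes on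
the image of `v ∈ M` only if the canonical homomorphism of `M` vanishes on `v`. Every iterated
bracket of generators other than `a` itself lies in this image, and there the occurrences of `a` no
longer count towards the degree. Hence multihomogeneous elements of the kernel of `i` are zero, by
induction on the degree.

The centralizer of `a` in the free associative algebra consists of the polynomials in `a`, so its
centralizer in `L` is `R a`. If `⁅x, z⁆ = 0` and `⁅x, a⁆ = ⁅z, e⁆` with `⁅a, e⁆ = 0`, then `e = s a`
and `x - s z` commutes with `a`, say `x = s z + t a`. Now `t ⁅a, z⁆ = 0`, so either `t = 0` and
`x ∈ R z`, or `z ∈ R a` and hence `x ∈ R a`. Two generators `a ≠ b` suffice, as `R a ∩ R b = 0`.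
-/

namespace FreeLie

open FreeAlgebra (ι)
open FreeLieAlgebra (of)
open MonoidAlgebra (single)

attribute [local instance 100] LieRing.ofAssociativeRing

section Centralizer

variable {R X : Type*}

section Words

variable [Semiring R] {a : X} {q : MonoidAlgebra R (FreeMonoid X)}

theorem coeff_of_mul_of_commute_single (h : Commute (single (FreeMonoid.of a) 1) q) (c : X)
    (w : FreeMonoid X) : q.coeff (FreeMonoid.of c * w) =
      (single (FreeMonoid.of a) 1 * q).coeff (FreeMonoid.of c * (w * FreeMonoid.of a)) := by
  rw [h.eq, ← mul_assoc, MonoidAlgebra.coeff_mul_single_mul, mul_one]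

theorem mem_powers_of_commute_single (h : Commute (single (FreeMonoid.of a) 1) q)
    {w : FreeMonoid X} {n : ℕ} (hw : q.coeff (w * FreeMonoid.of a ^ n) ≠ 0) :
    w ∈ Submonoid.powers (FreeMonoid.of a) := by
  induction w using FreeMonoid.inductionOn' generalizing n with
  | one => exact one_mem _
  | of_mul c w ih =>
    -- The coefficient of `c w a ^ n` in `q` is that of `c w a ^ (n + 1)` in `a q`.
    rw [mul_assoc, coeff_of_mul_of_commute_single h, mul_assoc, ← pow_succ] at hw
    obtain rfl : a = c := by
      by_contra hac
      exact hw (MonoidAlgebra.coeff_single_mul_of_forall_mul_ne _ _ fun d hd ↦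
        hac (List.cons.inj (congrArg FreeMonoid.toList hd)).1)
    rw [MonoidAlgebra.coeff_single_mul_mul, one_mul] at hw
    exact mul_mem (Submonoid.mem_powers _) (ih hw)

end Words

variable [CommSemiring R]

theorem centralizer_single_of (a : X) :
    Subalgebra.centralizer R {single (FreeMonoid.of a) (1 : R)} =
      Algebra.adjoin R {single (FreeMonoid.of a) (1 : R)} := by
  refine le_antisymm (fun q hq ↦ ?_) ?_
  · have hcomm : Commute (single (FreeMonoid.of a) 1) q := hq _ rfl
    rw [← MonoidAlgebra.sum_coeff_single q]
    refine sum_mem fun w hw ↦ ?_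
    obtain ⟨n, rfl⟩ := mem_powers_of_commute_single (n := 0) hcomm (by simpa using hw)
    have hsingle : single (FreeMonoid.of a ^ n) (q.coeff (FreeMonoid.of a ^ n)) =
        q.coeff (FreeMonoid.of a ^ n) • single (FreeMonoid.of a) (1 : R) ^ n := by
      simp [MonoidAlgebra.single_pow]
    exact hsingle ▸ Subalgebra.smul_mem _ (pow_mem (Algebra.self_mem_adjoin_singleton R _) n) _
  · exact Algebra.adjoin_singleton_le (Subalgebra.mem_centralizer_iff R |>.2 (by simp))

theorem centralizer_ι (a : X) :
    Subalgebra.centralizer R {ι R a} = Algebra.adjoin R {ι R a} := by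
  let e : FreeAlgebra R X ≃ₐ[R] MonoidAlgebra R (FreeMonoid X) :=
    FreeAlgebra.equivMonoidAlgebraFreeMonoid
  have he : e (ι R a) = single (FreeMonoid.of a) (1 : R) := by
    simp [e, FreeAlgebra.equivMonoidAlgebraFreeMonoid]
  ext p
  calc p ∈ Subalgebra.centralizer R {ι R a}
    _ ↔ e p ∈ Subalgebra.centralizer R {e (ι R a)} := by
      simp [Subalgebra.mem_centralizer_iff, ← map_mul]
    _ ↔ e p ∈ (Algebra.adjoin R {ι R a}).map (e : FreeAlgebra R X →ₐ[R] _) := by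
      rw [he, centralizer_single_of, AlgHom.map_adjoin_singleton, AlgEquiv.coe_toAlgHom, he]
    _ ↔ p ∈ Algebra.adjoin R {ι R a} :=
      Subalgebra.mem_map.trans (by simp)

open Classical in
theorem lift_single_of_mem_adjoin {a : X} {p : FreeAlgebra R X} (h : p ∈ Algebra.adjoin R {ι R a}) :
    FreeAlgebra.lift R (Pi.single a (ι R a)) p = p := by
  have heqOn : Set.EqOn (FreeAlgebra.lift R (Pi.single a (ι R a))) (AlgHom.id R _)
      (Algebra.adjoin R {ι R a}) :=
    AlgHom.eqOn_adjoin_iff.2 (by simp)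
  exact heqOn h

end Centralizer

section Derivation

variable {R X : Type*}

section CommSemiring

variable [CommSemiring R]

/-- The algebra homomorphism `p ↦ (p, D p)` into the dual numbers, where `D` is the derivation which
takes the value `f x` at the generator `x`. -/
noncomputable def dualNumberLift (f : X → FreeAlgebra R X) :
    FreeAlgebra R X →ₐ[R] DualNumber (FreeAlgebra R X) :=
  FreeAlgebra.lift R fun x ↦ TrivSqZeroExt.inl (ι R x) + TrivSqZeroExt.inr (f x)

theorem fst_dualNumberLift (f : X → FreeAlgebra R X) (p : FreeAlgebra R X) :
    (dualNumberLift f p).fst = p := by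
  have hcomp : (TrivSqZeroExt.fstHom R _ _).comp (dualNumberLift f) = AlgHom.id R _ := by
    ext x
    simp [dualNumberLift]
  exact DFunLike.congr_fun hcomp p

/-- The derivation of a free associative algebra with prescribed values on the generators, as a
linear map because `Derivation` requires a commutative algebra. -/
noncomputable def liftDerivation (f : X → FreeAlgebra R X) : Module.End R (FreeAlgebra R X) :=
  (TrivSqZeroExt.sndHom _ _).restrictScalars R ∘ₗ (dualNumberLift f).toLinearMap

theorem liftDerivation_ι (f : X → FreeAlgebra R X) (x : X) : liftDerivation f (ι R x) = f x := by
  simp [liftDerivation, dualNumberLift]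

theorem liftDerivation_mul (f : X → FreeAlgebra R X) (p q : FreeAlgebra R X) :
    liftDerivation f (p * q) = p * liftDerivation f q + liftDerivation f p * q := by
  simp [liftDerivation, fst_dualNumberLift]

end CommSemiring

theorem lie_liftDerivation_mulLeft [CommRing R] (f : X → FreeAlgebra R X) (p : FreeAlgebra R X) :
    ⁅liftDerivation f, LinearMap.mulLeft R p⁆ = LinearMap.mulLeft R (liftDerivation f p) := by
  ext q
  simp [Ring.lie_def, liftDerivation_mul]

end Derivation

section Elimination

variable (R : Type*) {X : Type*} [CommRing R]

/-- The canonical homomorphism from the free Lie algebra to the free associative algebra. -/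
noncomputable def toFreeAlgebra (X : Type*) : FreeLieAlgebra R X →ₗ⁅R⁆ FreeAlgebra R X :=
  FreeLieAlgebra.lift R (ι R)

/-- Lazard elimination of the generator `a`: the homomorphism from the free Lie algebra on the
symbols `(n, b)`, where `b ≠ a`, which sends `(n, b)` to `(ad a) ^ n b`. -/
noncomputable def elimination (a : X) :
    FreeLieAlgebra R (ℕ × {b // b ≠ a}) →ₗ⁅R⁆ FreeLieAlgebra R X :=
  FreeLieAlgebra.lift R fun y ↦ (LieAlgebra.ad R (FreeLieAlgebra R X) (of R a) ^ y.1) (of R y.2.1)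

open Classical in
/-- The representation of the free algebra on `X` which shows that elimination loses nothing:
`b ≠ a` acts by left multiplication by `(0, b)`, and `a` by the derivation `(n, b) ↦ (n + 1, b)`. -/
noncomputable def eliminationRep (a : X) :
    FreeAlgebra R X →ₐ[R] Module.End R (FreeAlgebra R (ℕ × {b // b ≠ a})) :=
  FreeAlgebra.lift R fun c ↦ if h : c = a then liftDerivation fun y ↦ ι R (y.1 + 1, y.2)
    else LinearMap.mulLeft R (ι R (0, ⟨c, h⟩))

variable {R}

@[simp]
theorem toFreeAlgebra_of (x : X) : toFreeAlgebra R X (of R x) = ι R x :=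
  FreeLieAlgebra.lift_of_apply _ _

theorem elimination_of_zero {a : X} (b : {b // b ≠ a}) :
    elimination R a (of R (0, b)) = of R b.1 := by
  simp [elimination]

theorem elimination_of_succ {a : X} (n : ℕ) (b : {b // b ≠ a}) :
    elimination R a (of R (n + 1, b)) = ⁅of R a, elimination R a (of R (n, b))⁆ := by
  simp [elimination, pow_succ']

theorem eliminationRep_ι_self (a : X) :
    eliminationRep R a (ι R a) = liftDerivation fun y ↦ ι R (y.1 + 1, y.2) := by
  simp [eliminationRep]

theorem eliminationRep_ι_of_ne {a : X} (b : {b // b ≠ a}) :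
    eliminationRep R a (ι R b.1) = LinearMap.mulLeft R (ι R (0, b)) := by
  simp [eliminationRep, b.2]

theorem eliminationRep_toFreeAlgebra_elimination_of {a : X} (n : ℕ) (b : {b // b ≠ a}) :
    eliminationRep R a (toFreeAlgebra R X (elimination R a (of R (n, b)))) =
      LinearMap.mulLeft R (ι R (n, b)) := by
  induction n with
  | zero => rw [elimination_of_zero, toFreeAlgebra_of, eliminationRep_ι_of_ne]
  | succ n ih =>
    rw [elimination_of_succ, LieHom.map_lie, toFreeAlgebra_of, Ring.lie_def, map_sub, map_mul,
      map_mul, ih, eliminationRep_ι_self, ← Ring.lie_def, lie_liftDerivation_mulLeft,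
      liftDerivation_ι]

theorem eliminationRep_toFreeAlgebra_elimination {a : X}
    (v : FreeLieAlgebra R (ℕ × {b // b ≠ a})) :
    eliminationRep R a (toFreeAlgebra R X (elimination R a v)) =
      LinearMap.mulLeft R (toFreeAlgebra R _ v) := by
  have hcomp : (eliminationRep R a).toLieHom.comp ((toFreeAlgebra R X).comp (elimination R a)) =
      (Algebra.lmul R (FreeAlgebra R (ℕ × {b // b ≠ a}))).toLieHom.comp (toFreeAlgebra R _) := by
    refine FreeLieAlgebra.hom_ext fun y ↦ ?_
    simp only [LieHom.comp_apply, toFreeAlgebra_of]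
    exact eliminationRep_toFreeAlgebra_elimination_of y.1 y.2
  exact DFunLike.congr_fun hcomp v

theorem toFreeAlgebra_eq_zero_of_elimination {a : X} {v : FreeLieAlgebra R (ℕ × {b // b ≠ a})}
    (h : toFreeAlgebra R X (elimination R a v) = 0) : toFreeAlgebra R _ v = 0 := by
  have hrep := DFunLike.congr_fun (eliminationRep_toFreeAlgebra_elimination v) 1
  rwa [h, map_zero, LinearMap.zero_apply, LinearMap.mulLeft_apply, mul_one, eq_comm] at hrep

end Elimination

section Monomials

variable {R X : Type*} [CommRing R]

theorem lieSpan_range_of : LieSubalgebra.lieSpan R _ (Set.range (of R (X := X))) = ⊤ := by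
  let K := LieSubalgebra.lieSpan R _ (Set.range (of R (X := X)))
  have hof (x : X) : of R x ∈ K := LieSubalgebra.subset_lieSpan ⟨x, rfl⟩
  have hincl : K.incl.comp (FreeLieAlgebra.lift R fun x ↦ (⟨of R x, hof x⟩ : K)) = LieHom.id := by
    ext x
    simp
  refine eq_top_iff.2 fun u _ ↦ ?_
  rw [← LieHom.id_apply (R := R) u, ← hincl]
  exact Subtype.property _

/-- `IsMonomial m u` says that `u` is an iterated bracket of generators, in which each generator `x`
occurs `m x` times. -/
inductive IsMonomial : (X →₀ ℕ) → FreeLieAlgebra R X → Prop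
  | of (x : X) : IsMonomial (Finsupp.single x 1) (of R x)
  | lie {m n : X →₀ ℕ} {u v : FreeLieAlgebra R X} :
      IsMonomial m u → IsMonomial n v → IsMonomial (m + n) ⁅u, v⁆

theorem IsMonomial.ne_zero {m : X →₀ ℕ} {u : FreeLieAlgebra R X} (h : IsMonomial m u) :
    m ≠ 0 := by
  induction h with
  | of x => simp
  | lie _ _ ih _ => simp [ih]

theorem IsMonomial.eq_of {a : X} {m : X →₀ ℕ} {u : FreeLieAlgebra R X} (h : IsMonomial m u)
    (hm : m = Finsupp.single a 1) : u = FreeLieAlgebra.of R a := by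
  cases h with
  | of x => rw [Finsupp.single_left_injective one_ne_zero hm]
  | @lie m n u v hu hv =>
    have hdegree : m.degree + n.degree = 1 := by rw [← map_add, hm, Finsupp.degree_single]
    have hm0 := (Finsupp.degree_eq_zero_iff m).not.2 hu.ne_zero
    have hn0 := (Finsupp.degree_eq_zero_iff n).not.2 hv.ne_zero
    omega

variable (R) in
/-- The span of the iterated brackets of generators whose multidegree lies in `s`. For `s = {m}` it
is the multihomogeneous component of degree `m`. -/
noncomputable def monomialSpan (s : Set (X →₀ ℕ)) : Submodule R (FreeLieAlgebra R X) :=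
  Submodule.span R {u | ∃ m ∈ s, IsMonomial m u}

theorem IsMonomial.mem_monomialSpan {s : Set (X →₀ ℕ)} {m : X →₀ ℕ} {u : FreeLieAlgebra R X}
    (h : IsMonomial m u) (hm : m ∈ s) : u ∈ monomialSpan R s :=
  Submodule.subset_span ⟨m, hm, h⟩

theorem monomialSpan_le {s : Set (X →₀ ℕ)} {S : Submodule R (FreeLieAlgebra R X)} :
    monomialSpan R s ≤ S ↔ ∀ m ∈ s, ∀ u, IsMonomial m u → u ∈ S :=
  Submodule.span_le.trans ⟨fun h m hm _ hu ↦ h ⟨m, hm, hu⟩, fun h u ⟨m, hm, hu⟩ ↦ h m hm u hu⟩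

theorem monomialSpan_mono {s t : Set (X →₀ ℕ)} (h : s ⊆ t) : monomialSpan R s ≤ monomialSpan R t :=
  monomialSpan_le.2 fun _ hm _ hu ↦ hu.mem_monomialSpan (h hm)

theorem monomialSpan_eq_iSup (s : Set (X →₀ ℕ)) :
    monomialSpan R s = ⨆ m : s, monomialSpan R {m.1} := by
  refine le_antisymm (monomialSpan_le.2 fun m hm _ hu ↦ ?_) (iSup_le fun m ↦ ?_)
  · exact le_iSup (fun m : s ↦ monomialSpan R {m.1}) ⟨m, hm⟩ (hu.mem_monomialSpan rfl)
  · exact monomialSpan_le.2 fun _ hn _ hu ↦ hu.mem_monomialSpan (hn ▸ m.2)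

theorem monomialSpan_singleton_single_le (a : X) :
    monomialSpan R {Finsupp.single a 1} ≤ R ∙ of R a :=
  monomialSpan_le.2 fun _ hm _ hu ↦ hu.eq_of hm ▸ Submodule.mem_span_singleton_self _

open Pointwise in
theorem lie_mem_monomialSpan {s t : Set (X →₀ ℕ)} {u v : FreeLieAlgebra R X}
    (hu : u ∈ monomialSpan R s) (hv : v ∈ monomialSpan R t) : ⁅u, v⁆ ∈ monomialSpan R (s + t) := by
  have hle : Submodule.map₂ (LieModule.toEnd R _ (FreeLieAlgebra R X)).toLinearMap
      (monomialSpan R s) (monomialSpan R t) ≤ monomialSpan R (s + t) := by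
    rw [monomialSpan, monomialSpan, Submodule.map₂_span_span, Submodule.span_le]
    rintro _ ⟨u, ⟨m, hm, hu⟩, v, ⟨n, hn, hv⟩, rfl⟩
    exact (hu.lie hv).mem_monomialSpan (Set.add_mem_add hm hn)
  exact hle (Submodule.apply_mem_map₂ _ hu hv)

theorem monomialSpan_univ : monomialSpan R (Set.univ : Set (X →₀ ℕ)) = ⊤ := by
  let K : LieSubalgebra R (FreeLieAlgebra R X) :=
    { monomialSpan R Set.univ with
      lie_mem' hu hv := by simpa using lie_mem_monomialSpan hu hv }
  have hK : LieSubalgebra.lieSpan R _ (Set.range (of R)) ≤ K :=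
    LieSubalgebra.lieSpan_le.2 <| Set.range_subset_iff.2 fun x ↦
      (IsMonomial.of x).mem_monomialSpan (Set.mem_univ _)
  rw [lieSpan_range_of] at hK
  exact eq_top_iff.2 hK

end Monomials

section Grading

variable {R X : Type*} [CommRing R]

variable (R X) in
/-- The coaction `p ↦ ∑ m, m ⊗ p m` of the multigrading, where `p m` denotes the multihomogeneous
component of `p` of degree `m`. -/
noncomputable def degreeHom :
    FreeAlgebra R X →ₐ[R] AddMonoidAlgebra (FreeAlgebra R X) (X →₀ ℕ) :=
  FreeAlgebra.lift R fun x ↦ AddMonoidAlgebra.single (Finsupp.single x 1) (ι R x)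

theorem IsMonomial.degreeHom_toFreeAlgebra {m : X →₀ ℕ} {u : FreeLieAlgebra R X}
    (h : IsMonomial m u) :
    degreeHom R X (toFreeAlgebra R X u) = AddMonoidAlgebra.single m (toFreeAlgebra R X u) := by
  induction h with
  | of x => simp [degreeHom]
  | @lie m n u v _ _ hu hv =>
    simp only [LieHom.map_lie, Ring.lie_def, map_sub, map_mul, hu, hv,
      AddMonoidAlgebra.single_mul_single, AddMonoidAlgebra.single_sub, add_comm n m]

theorem degreeHom_toFreeAlgebra {m : X →₀ ℕ} {u : FreeLieAlgebra R X}
    (hu : u ∈ monomialSpan R {m}) :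
    degreeHom R X (toFreeAlgebra R X u) = AddMonoidAlgebra.single m (toFreeAlgebra R X u) := by
  induction hu using Submodule.span_induction with
  | mem u hu =>
    obtain ⟨_, rfl, hu⟩ := hu
    exact hu.degreeHom_toFreeAlgebra
  | zero => simp
  | add u v _ _ hu hv => simp [hu, hv]
  | smul r u _ hu => simp [hu]

theorem injOn_toFreeAlgebra_monomialSpan {s : Set (X →₀ ℕ)}
    (h : ∀ m ∈ s, Set.InjOn (toFreeAlgebra R X) (monomialSpan R {m})) :
    Set.InjOn (toFreeAlgebra R X) (monomialSpan R s) := by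
  classical
  refine (Set.injOn_iff_map_eq_zero _ _).2 fun u hu hu0 ↦ ?_
  rw [monomialSpan_eq_iSup] at hu
  obtain ⟨f, hf, rfl⟩ := (Submodule.mem_iSup_iff_exists_finsupp _ _).1 hu
  refine Finset.sum_eq_zero fun m hm ↦
    (Set.injOn_iff_map_eq_zero _ _).1 (h m.1 m.2) _ (hf m) ?_
  have hcoeff := congrArg (fun p ↦ (degreeHom R X p).coeff m.1) hu0
  simp only [Finsupp.sum, map_sum, degreeHom_toFreeAlgebra (hf _), map_zero] at hcoeff
  simpa [Finsupp.single_apply, ← Subtype.ext_iff, Finsupp.mem_support_iff.1 hm] using hcoeff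

end Grading

section EliminationRange

variable {R X : Type*} [CommRing R] {a : X}

variable (R) in
/-- The image under Lazard elimination of `a` of the elements of length `k`, where the symbols
`(n, b)` have length `1`. -/
noncomputable def eliminationRange (a : X) (k : ℕ) : Submodule R (FreeLieAlgebra R X) :=
  (monomialSpan R {n | n.degree = k}).map (elimination R a).toLinearMap

theorem elimination_mem_eliminationRange {n : (ℕ × {b // b ≠ a}) →₀ ℕ}
    {v : FreeLieAlgebra R (ℕ × {b // b ≠ a})} (h : IsMonomial n v) :
    elimination R a v ∈ eliminationRange R a n.degree :=
  Submodule.mem_map_of_mem (h.mem_monomialSpan rfl)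

theorem elimination_of_mem_eliminationRange (y : ℕ × {b // b ≠ a}) :
    elimination R a (of R y) ∈ eliminationRange R a 1 := by
  simpa using elimination_mem_eliminationRange (R := R) (.of y)

theorem lie_mem_eliminationRange {k l : ℕ} {u v : FreeLieAlgebra R X}
    (hu : u ∈ eliminationRange R a k) (hv : v ∈ eliminationRange R a l) :
    ⁅u, v⁆ ∈ eliminationRange R a (k + l) := by
  obtain ⟨u, hu, rfl⟩ := hu
  obtain ⟨v, hv, rfl⟩ := hv
  refine ⟨⁅u, v⁆, monomialSpan_mono ?_ (lie_mem_monomialSpan hu hv), LieHom.map_lie _ _ _⟩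
  rintro _ ⟨m, rfl, n, rfl, rfl⟩
  exact map_add _ m n

theorem IsMonomial.lie_of_elimination_mem_eliminationRange {n : (ℕ × {b // b ≠ a}) →₀ ℕ}
    {v : FreeLieAlgebra R (ℕ × {b // b ≠ a})} (h : IsMonomial n v) :
    ⁅FreeLieAlgebra.of R a, elimination R a v⁆ ∈ eliminationRange R a n.degree := by
  induction h with
  | of y =>
    rw [← elimination_of_succ, Finsupp.degree_single]
    exact elimination_of_mem_eliminationRange _
  | @lie m n u v hu hv ihu ihv =>
    rw [map_add, LieHom.map_lie, leibniz_lie]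
    exact add_mem (lie_mem_eliminationRange ihu (elimination_mem_eliminationRange hv))
      (lie_mem_eliminationRange (elimination_mem_eliminationRange hu) ihv)

theorem lie_of_mem_eliminationRange {k : ℕ} {u : FreeLieAlgebra R X}
    (hu : u ∈ eliminationRange R a k) : ⁅of R a, u⁆ ∈ eliminationRange R a k := by
  have hle : eliminationRange R a k ≤
      (eliminationRange R a k).comap (LieAlgebra.ad R _ (of R a)) := by
    refine Submodule.map_le_iff_le_comap.2 (monomialSpan_le.2 ?_)
    rintro n rfl v hv
    exact hv.lie_of_elimination_mem_eliminationRange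
  exact hle hu

theorem IsMonomial.mem_eliminationRange {m : X →₀ ℕ} {u : FreeLieAlgebra R X}
    (h : IsMonomial m u) (hm : m ≠ Finsupp.single a 1) :
    u ∈ eliminationRange R a (m.erase a).degree := by
  induction h with
  | of b =>
    have hb : b ≠ a := fun hb ↦ hm (hb ▸ rfl)
    rw [Finsupp.erase_single_ne hb.symm, Finsupp.degree_single, ← elimination_of_zero ⟨b, hb⟩]
    exact elimination_of_mem_eliminationRange _
  | @lie m n u v hu hv ihu ihv =>
    rw [Finsupp.erase_add, map_add]
    by_cases hma : m = Finsupp.single a 1 <;> by_cases hna : n = Finsupp.single a 1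
    · rw [hu.eq_of hma, hv.eq_of hna, lie_self]
      exact zero_mem _
    · rw [hu.eq_of hma, hma, Finsupp.erase_single, map_zero, zero_add]
      exact lie_of_mem_eliminationRange (ihv hna)
    · rw [hv.eq_of hna, hna, Finsupp.erase_single, map_zero, add_zero, ← lie_skew]
      exact neg_mem (lie_of_mem_eliminationRange (ihu hma))
    · exact lie_mem_eliminationRange (ihu hma) (ihv hna)

end EliminationRange

section Injectivity

variable {R X : Type*} [CommRing R]

open Classical in
variable (R) in
/-- The coefficient of the generator `a`: the homomorphism to the abelian Lie algebra `R` which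
sends `a` to `1` and the other generators to `0`. -/
noncomputable def coord (a : X) : FreeLieAlgebra R X →ₗ⁅R⁆ R :=
  (FreeAlgebra.lift R (Pi.single a (1 : R))).toLieHom.comp (toFreeAlgebra R X)

theorem coord_of_self (a : X) : coord R a (of R a) = 1 := by
  simp [coord]

theorem coord_of_ne {a b : X} (h : b ≠ a) : coord R a (of R b) = 0 := by
  simp [coord, h]

theorem injOn_toFreeAlgebra_span_of (a : X) : Set.InjOn (toFreeAlgebra R X) (R ∙ of R a) := by
  refine (Set.injOn_iff_map_eq_zero _ _).2 fun u hu hu0 ↦ ?_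
  obtain ⟨r, rfl⟩ := Submodule.mem_span_singleton.1 hu
  have hcoord : coord R a (r • of R a) = 0 := by
    rw [coord, LieHom.comp_apply, hu0, map_zero]
  rw [map_smul, coord_of_self, smul_eq_mul, mul_one] at hcoord
  rw [hcoord, zero_smul]

theorem injOn_toFreeAlgebra_eliminationRange {a : X} {k : ℕ}
    (h : Set.InjOn (toFreeAlgebra R (ℕ × {b // b ≠ a}))
      (monomialSpan R {n : (ℕ × {b // b ≠ a}) →₀ ℕ | n.degree = k})) :
    Set.InjOn (toFreeAlgebra R X) (eliminationRange R a k) := by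
  refine (Set.injOn_iff_map_eq_zero _ _).2 ?_
  rintro _ ⟨v, hv, rfl⟩ hv0
  rw [(Set.injOn_iff_map_eq_zero _ _).1 h v hv (toFreeAlgebra_eq_zero_of_elimination hv0), map_zero]

theorem injOn_toFreeAlgebra_monomialSpan_singleton (m : X →₀ ℕ) :
    Set.InjOn (toFreeAlgebra R X) (monomialSpan R {m}) := by
  induction hk : m.degree using Nat.strong_induction_on generalizing X with
  | _ k ih =>
  obtain rfl | hm := eq_or_ne m 0
  · have hbot : monomialSpan R {(0 : X →₀ ℕ)} ≤ ⊥ :=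
      monomialSpan_le.2 fun _ hm _ hu ↦ (hu.ne_zero hm).elim
    exact Set.InjOn.mono hbot (by simp)
  obtain ⟨a, ha⟩ := Finsupp.ne_iff.1 hm
  by_cases hma : m = Finsupp.single a 1
  · rw [hma]
    exact (injOn_toFreeAlgebra_span_of a).mono (monomialSpan_singleton_single_le a)
  · have hlt : (m.erase a).degree < k := by
      rw [← hk, ← Finsupp.single_add_erase a m, map_add, Finsupp.degree_single]
      simpa using Nat.pos_of_ne_zero ha
    have hle : monomialSpan R {m} ≤ eliminationRange R a (m.erase a).degree :=
      monomialSpan_le.2 fun _ hm _ hu ↦ hm ▸ hu.mem_eliminationRange (hm ▸ hma)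
    refine (injOn_toFreeAlgebra_eliminationRange ?_).mono hle
    exact injOn_toFreeAlgebra_monomialSpan fun n hn ↦ ih _ hlt n hn

theorem toFreeAlgebra_injective : Function.Injective (toFreeAlgebra R X) := by
  rw [← Set.injOn_univ, ← Submodule.top_coe (R := R), ← monomialSpan_univ]
  exact injOn_toFreeAlgebra_monomialSpan fun m _ ↦ injOn_toFreeAlgebra_monomialSpan_singleton m

instance : Module.IsTorsionFree R (FreeLieAlgebra R X) :=
  toFreeAlgebra_injective.moduleIsTorsionFree _ (map_smul _)

end Injectivity

section GeneratorCentralizer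

variable {R X : Type*} [CommRing R]

open Classical in
theorem lift_single_toFreeAlgebra (a : X) (u : FreeLieAlgebra R X) :
    FreeAlgebra.lift R (Pi.single a (ι R a)) (toFreeAlgebra R X u) = coord R a u • ι R a := by
  obtain ⟨f, hf⟩ : ∃ f : R →ₗ⁅R⁆ FreeAlgebra R X, ∀ r, f r = r • ι R a :=
    ⟨{ LinearMap.toSpanSingleton R _ (ι R a) with
        map_lie' {r s} := by simp [Ring.lie_def, mul_comm s r, smul_comm s r] }, fun _ ↦ rfl⟩
  have hcomp : (FreeAlgebra.lift R (Pi.single a (ι R a))).toLieHom.comp (toFreeAlgebra R X) =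
      f.comp (coord R a) := by
    refine FreeLieAlgebra.hom_ext fun b ↦ ?_
    obtain rfl | hb := eq_or_ne b a
    · simp [hf, coord_of_self]
    · simp [coord_of_ne hb, hb]
  exact (DFunLike.congr_fun hcomp u).trans (hf _)

theorem lie_of_eq_zero_iff {a : X} {u : FreeLieAlgebra R X} :
    ⁅of R a, u⁆ = 0 ↔ u ∈ R ∙ of R a := by
  refine ⟨fun h ↦ ?_, fun h ↦ ?_⟩
  · have hu : toFreeAlgebra R X u ∈ Algebra.adjoin R {ι R a} := by
      rw [← centralizer_ι, Subalgebra.mem_centralizer_iff]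
      rintro _ rfl
      rw [← sub_eq_zero, ← Ring.lie_def, ← toFreeAlgebra_of, ← LieHom.map_lie, h, map_zero]
    refine Submodule.mem_span_singleton.2 ⟨coord R a u, toFreeAlgebra_injective ?_⟩
    rw [map_smul, toFreeAlgebra_of, ← lift_single_toFreeAlgebra, lift_single_of_mem_adjoin hu]
  · obtain ⟨r, rfl⟩ := Submodule.mem_span_singleton.1 h
    rw [lie_smul, lie_self, smul_zero]

theorem disjoint_span_of {a b : X} (h : a ≠ b) : Disjoint (R ∙ of R a) (R ∙ of R b) := by
  refine Submodule.disjoint_def.2 fun u ha hb ↦ ?_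
  obtain ⟨r, rfl⟩ := Submodule.mem_span_singleton.1 ha
  obtain ⟨s, hs⟩ := Submodule.mem_span_singleton.1 hb
  have hcoord := congrArg (coord R a) hs
  rw [map_smul, map_smul, coord_of_self, coord_of_ne h.symm, smul_zero, smul_eq_mul, mul_one]
    at hcoord
  rw [← hcoord, zero_smul]

theorem mem_span_or_mem_span_of_of_lie_eq [IsDomain R] {x z e : FreeLieAlgebra R X} {a : X}
    (hxz : ⁅x, z⁆ = 0) (hae : ⁅of R a, e⁆ = 0) (h : ⁅x, of R a⁆ = ⁅z, e⁆) :
    x ∈ R ∙ z ∨ x ∈ R ∙ of R a := by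
  obtain ⟨s, rfl⟩ := Submodule.mem_span_singleton.1 (lie_of_eq_zero_iff.1 hae)
  have hsub : ⁅of R a, x - s • z⁆ = 0 := by
    rw [← lie_skew, sub_lie, h, smul_lie, lie_smul, sub_self, neg_zero]
  obtain ⟨t, ht⟩ := Submodule.mem_span_singleton.1 (lie_of_eq_zero_iff.1 hsub)
  obtain rfl : x = s • z + t • of R a := by rw [ht, add_sub_cancel]
  have htz : t • ⁅of R a, z⁆ = 0 := by simpa using hxz
  obtain rfl | hz := smul_eq_zero.1 htz
  · exact .inl (Submodule.mem_span_singleton.2 ⟨s, by simp⟩)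
  · exact .inr (add_mem (Submodule.smul_mem _ _ (lie_of_eq_zero_iff.1 hz))
      (Submodule.smul_mem _ _ (Submodule.mem_span_singleton_self _)))

end GeneratorCentralizer

end FreeLie

/-- In a non-commutative free Lie algebra `L` over an integral domain `R`, the
predicate `x ∈ Rz` is defined by the formula
`⁅x, z⁆ = 0 ∧ ∀ e ∃ e', ⁅e, e'⁆ = 0 ∧ ⁅x, e⁆ = ⁅z, e'⁆`. -/
theorem mem_scalar_multiples_iff {R : Type*} [CommRing R] [IsDomain R]
    {X : Type*} (hX : ∃ x y : X, x ≠ y) (x z : FreeLieAlgebra R X) :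
    (∃ r : R, x = r • z) ↔
      (⁅x, z⁆ = 0 ∧ ∀ e : FreeLieAlgebra R X, ∃ e' : FreeLieAlgebra R X,
        ⁅e, e'⁆ = 0 ∧ ⁅x, e⁆ = ⁅z, e'⁆) := by
  constructor
  · rintro ⟨r, rfl⟩
    exact ⟨by simp, fun e ↦ ⟨r • e, by simp, by simp⟩⟩
  · rintro ⟨hxz, h⟩
    have hspan (c : X) : x ∈ R ∙ z ∨ x ∈ R ∙ FreeLieAlgebra.of R c := by
      obtain ⟨e, hce, he⟩ := h (FreeLieAlgebra.of R c)
      exact FreeLie.mem_span_or_mem_span_of_of_lie_eq hxz hce he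
    suffices x ∈ R ∙ z by
      obtain ⟨r, hr⟩ := Submodule.mem_span_singleton.1 this
      exact ⟨r, hr.symm⟩
    obtain ⟨a, b, hab⟩ := hX
    obtain hz | ha := hspan a
    · exact hz
    obtain hz | hb := hspan b
    · exact hz
    rw [Submodule.disjoint_def.1 (FreeLie.disjoint_span_of hab) x ha hb]
    exact zero_mem _
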